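/- Let (y1, y2) be a solution of the Berger boundary value problem with phi(0) ≠ 1 (where K = exp∘y1, phi = exp∘y2). Then for every x ∈ (0,1): 3 − 4 (phi(x) K(x))^{-1/3} + K(x)^{-1/3} phi(x)^{-4/3} > (1/36) x^2 (1−x^2)^2 (y2'(x))^2 ≥ 0. -/

import Mathlib

open Real Set

/-- Equation (E1) of the Berger Einstein ODE system:
`y1'' + (1/6)(y1')² + (1/3)(y2')² − x⁻¹(1+3x²)(1−x²)⁻¹ y1' = 0`. -/
noncomputable def BergerE1 (y1 y2 : ℝ → ℝ) (x : ℝ) : ℝ :=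
  deriv (deriv y1) x + (1/6) * (deriv y1 x)^2 + (1/3) * (deriv y2 x)^2
    - x⁻¹ * (1 + 3*x^2) * (1 - x^2)⁻¹ * deriv y1 x

/-- Equation (E2) of the Berger Einstein ODE system, with `K = exp ∘ y1`, `phi = exp ∘ y2`:
`y1'' + (1/2)(y1')² − x⁻¹(5+7x²)(1−x²)⁻¹ y1'
  + 8(1−x²)⁻²(6 − 8 K^{-1/3} phi^{-1/3} + 2 K^{-1/3} phi^{-4/3}) = 0`. -/
noncomputable def BergerE2 (y1 y2 : ℝ → ℝ) (x : ℝ) : ℝ :=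
  deriv (deriv y1) x + (1/2) * (deriv y1 x)^2
    - x⁻¹ * (5 + 7*x^2) * (1 - x^2)⁻¹ * deriv y1 x
    + 8 * ((1 - x^2)⁻¹)^2 *
      (6 - 8 * Real.exp (y1 x) ^ (-(1:ℝ)/3) * Real.exp (y2 x) ^ (-(1:ℝ)/3)
         + 2 * Real.exp (y1 x) ^ (-(1:ℝ)/3) * Real.exp (y2 x) ^ (-(4:ℝ)/3))

/-- Equation (E3) of the Berger Einstein ODE system, with `K = exp ∘ y1`, `phi = exp ∘ y2`:
`y2'' + (1/2) y1' y2' − 2x⁻¹(1+2x²)(1−x²)⁻¹ y2'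
  + 32(1−x²)⁻² K^{-1/3} phi^{-1/3}(phi⁻¹ − 1) = 0`. -/
noncomputable def BergerE3 (y1 y2 : ℝ → ℝ) (x : ℝ) : ℝ :=
  deriv (deriv y2) x + (1/2) * deriv y1 x * deriv y2 x
    - 2 * x⁻¹ * (1 + 2*x^2) * (1 - x^2)⁻¹ * deriv y2 x
    + 32 * ((1 - x^2)⁻¹)^2 * Real.exp (y1 x) ^ (-(1:ℝ)/3) * Real.exp (y2 x) ^ (-(1:ℝ)/3)
      * ((Real.exp (y2 x))⁻¹ - 1)

/-- A solution of the Berger boundary value problem: a pair `(y1, y2)` smooth on `[0,1]`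
(realized as globally smooth functions), real analytic on `(0,1]`, satisfying (E1)–(E3)
on `(0,1)`, with boundary conditions `K(1) = phi(1) = 1` (where `K = exp ∘ y1`,
`phi = exp ∘ y2`) and `y1'(0) = y2'(0) = y1'(1) = y2'(1) = 0`. -/
structure BergerBVPSolution (y1 y2 : ℝ → ℝ) : Prop where
  smooth1 : ContDiff ℝ (⊤ : ℕ∞) y1
  smooth2 : ContDiff ℝ (⊤ : ℕ∞) y2
  analytic1 : AnalyticOnNhd ℝ y1 (Ioc 0 1)
  analytic2 : AnalyticOnNhd ℝ y2 (Ioc 0 1)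
  eqE1 : ∀ x ∈ Ioo (0:ℝ) 1, BergerE1 y1 y2 x = 0
  eqE2 : ∀ x ∈ Ioo (0:ℝ) 1, BergerE2 y1 y2 x = 0
  eqE3 : ∀ x ∈ Ioo (0:ℝ) 1, BergerE3 y1 y2 x = 0
  bdryK : Real.exp (y1 1) = 1
  bdryPhi : Real.exp (y2 1) = 1
  der1_0 : deriv y1 0 = 0
  der2_0 : deriv y2 0 = 0
  der1_1 : deriv y1 1 = 0
  der2_1 : deriv y2 1 = 0

/-! Let `σ` be the sign of `y₂(0)`. In the unknowns `P = (1 - x²) y₁'`, `Q = -σ (1 - x²) y₂'`,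
`u = (K φ)^{-1/3}`, `w = K^{-1/3} φ^{-4/3}` the weighted derivative `x (1 - x²) d/dx` of each
unknown is a polynomial in `x` and the unknowns, and a combination of (E1) and (E2) is an algebraic
constraint expressing `F = 3 - 4 u + w` through `P` and `Q`.

The estimates rest on one principle: a function that is nonnegative at `1` and decreasing wherever
it is negative is nonnegative. It yields `P ≥ 0`, `Q ≥ 0`, then the barrier `4 x A ≤ Q + k Q²` for
`A = σ (u - w)`, with `k = 0` if `σ = 1` and `k = 5 / 48` if `σ = -1`, and finally
`F > x² Q² / 36`: where this fails, the constraint forces `36 x P ≤ (4 x² - 3) Q²`, which together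
with the barrier makes `F - x² Q² / 36` strictly decreasing. Only for `σ = -1` does the last step
need an a priori bound on `Q`, namely `x Q ≤ 9 / 2`.
-/

section Barrier

variable {f : ℝ → ℝ} {a b x C : ℝ}

lemma nonneg_of_deriv_neg_of_neg (hf : ContinuousOn f (Icc a b)) (hb : 0 ≤ f b)
    (hf' : ∀ x ∈ Ioo a b, f x < 0 → deriv f x < 0) (hx : x ∈ Icc a b) : 0 ≤ f x := by
  have hIoo : ∀ x ∈ Ioo a b, 0 ≤ f x := by
    intro x hx
    by_contra! hneg
    obtain ⟨c, hc, hmin⟩ := isCompact_Icc.exists_isMinOn (nonempty_Icc.2 hx.2.le)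
      (hf.mono (Icc_subset_Icc_left hx.1.le))
    have hfc : f c < 0 := (hmin (left_mem_Icc.2 hx.2.le)).trans_lt hneg
    have hcb : c < b := hc.2.lt_of_ne fun h => hfc.not_ge (h ▸ hb)
    have hdc : deriv f c < 0 := hf' c ⟨hx.1.trans_le hc.1, hcb⟩ hfc
    have hnonneg := hmin.localize.hasFDerivWithinAt_nonneg
      (differentiableAt_of_deriv_ne_zero hdc.ne).hasDerivAt.hasFDerivAt.hasFDerivWithinAt
      (sub_mem_posTangentConeAt_of_segment_subset
        ((convex_Icc x b).segment_subset hc (right_mem_Icc.2 hx.2.le)))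
    simp only [ContinuousLinearMap.toSpanSingleton_apply, smul_eq_mul] at hnonneg
    exact hnonneg.not_gt (mul_neg_of_pos_of_neg (sub_pos.2 hcb) hdc)
  rcases hx.2.eq_or_lt with rfl | hxb
  · exact hb
  · have hcl := closure_Ioo (hx.1.trans_lt hxb).ne
    exact le_on_closure hIoo continuousOn_const (hcl ▸ hf) (hcl ▸ hx)

lemma pos_of_deriv_neg_of_nonpos (hf : ContinuousOn f (Icc a b)) (hb : 0 ≤ f b)
    (hf' : ∀ x ∈ Ioo a b, f x ≤ 0 → deriv f x < 0) (hx : x ∈ Ioo a b) : 0 < f x := by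
  have hnonneg : ∀ y ∈ Icc a b, 0 ≤ f y := fun y =>
    nonneg_of_deriv_neg_of_neg hf hb fun z hz h => hf' z hz h.le
  by_contra! hle
  have hmin : IsLocalMin f x := by
    filter_upwards [Icc_mem_nhds hx.1 hx.2] with y hy using hle.trans (hnonneg y hy)
  exact (hf' x hx hle).ne hmin.deriv_eq_zero

lemma le_of_deriv_neg_of_gt (hf : ContinuousOn f (Icc a b)) (ha : f a ≤ C)
    (hf' : ∀ x ∈ Ioo a b, C < f x → deriv f x < 0) (hx : x ∈ Icc a b) : f x ≤ C := by
  have hreflect : ∀ {y}, y ∈ Icc a b → a + b - y ∈ Icc a b := fun hy =>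
    ⟨by linarith [hy.2], by linarith [hy.1]⟩
  have hcont : ContinuousOn (fun y => C - f (a + b - y)) (Icc a b) :=
    continuousOn_const.sub (hf.comp (by fun_prop) fun y hy => hreflect hy)
  have := nonneg_of_deriv_neg_of_neg hcont (by simpa using ha) (fun y hy hneg => by
    rw [deriv_const_sub, deriv_comp_const_sub, neg_neg]
    exact hf' _ ⟨by linarith [hy.2], by linarith [hy.1]⟩ (by linarith)) (hreflect hx)
  simpa using this

lemma nonpos_of_neg_mul_le_deriv (hf : ContinuousOn f (Icc a b))
    (hd : DifferentiableOn ℝ f (Ioo a b)) (hf' : ∀ x ∈ Ioo a b, -C * f x ≤ deriv f x)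
    (hb : f b ≤ 0) (hx : x ∈ Icc a b) : f x ≤ 0 := by
  have hmono : MonotoneOn (fun x => exp (C * x) * f x) (Icc a b) := by
    refine monotoneOn_of_deriv_nonneg (convex_Icc a b) (by fun_prop) ?_ fun y hy => ?_
    · rw [interior_Icc]
      fun_prop
    rw [interior_Icc] at hy
    have hexp : HasDerivAt (fun x => exp (C * x)) (exp (C * y) * C) y := by
      simpa using ((hasDerivAt_id y).const_mul C).exp
    have hfy := (hd.differentiableAt (Ioo_mem_nhds hy.1 hy.2)).hasDerivAt
    rw [(hexp.fun_mul hfy).deriv]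
    linear_combination exp (C * y) * hf' y hy
  have hle : exp (C * x) * f x ≤ exp (C * b) * f b :=
    hmono hx (right_mem_Icc.2 (hx.1.trans hx.2)) hx.2
  exact nonpos_of_mul_nonpos_right (hle.trans (mul_nonpos_of_nonneg_of_nonpos (exp_pos _).le hb))
    (exp_pos _)

lemma deriv_deriv_nonneg_of_isLocalMin (hmin : IsLocalMin f x) (hf : ContinuousAt f x) :
    0 ≤ deriv (deriv f) x := by
  by_contra! hneg
  have hmax := isLocalMax_of_deriv_deriv_neg hneg hmin.deriv_eq_zero hf
  have hconst : f =ᶠ[nhds x] fun _ => f x := by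
    filter_upwards [hmin, hmax] with y h₁ h₂ using le_antisymm h₂ h₁
  simp [hconst.deriv.deriv_eq] at hneg

end Barrier

lemma one_sub_sq_pos {x : ℝ} (hx : x ∈ Ioo (0 : ℝ) 1) : 0 < 1 - x ^ 2 := by
  nlinarith [hx.1, hx.2]

lemma neg_of_weight_mul_neg {x d : ℝ} (hx : x ∈ Ioo (0 : ℝ) 1) (h : x * (1 - x ^ 2) * d < 0) :
    d < 0 :=
  neg_of_mul_neg_right h (mul_pos hx.1 (one_sub_sq_pos hx)).le

/-- A `C²` solution of the Berger system on `(0, 1)` with `K(1) = φ(1) = 1` and `φ(0) ≠ 1`, the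
conditions being stated through `y₁ = log K` and `y₂ = log φ`. The functions are bundled so that the
rescaled unknowns of a solution `S` can be written `S.P`, `S.Q`, `S.u`, `S.w`. -/
structure NontrivialBergerSolution where
  y₁ : ℝ → ℝ
  y₂ : ℝ → ℝ
  contDiff_y₁ : ContDiff ℝ 2 y₁
  contDiff_y₂ : ContDiff ℝ 2 y₂
  eqE1 : ∀ x ∈ Ioo (0 : ℝ) 1, BergerE1 y₁ y₂ x = 0
  eqE2 : ∀ x ∈ Ioo (0 : ℝ) 1, BergerE2 y₁ y₂ x = 0
  eqE3 : ∀ x ∈ Ioo (0 : ℝ) 1, BergerE3 y₁ y₂ x = 0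
  y₁_one : y₁ 1 = 0
  y₂_one : y₂ 1 = 0
  y₂_zero_ne : y₂ 0 ≠ 0

namespace NontrivialBergerSolution

variable (S : NontrivialBergerSolution) {x k : ℝ}

/-- The sign of `y₂(0)`, which turns out to be the sign of `y₂` on `[0, 1)`. -/
noncomputable def σ : ℝ := Real.sign (S.y₂ 0)

/-- The rescaled derivative `P = (1 - x²) y₁'`. -/
noncomputable def P (x : ℝ) : ℝ := (1 - x ^ 2) * deriv S.y₁ x

/-- The rescaled derivative `Q = -σ (1 - x²) y₂'`, with the sign chosen to make it nonnegative. -/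
noncomputable def Q (x : ℝ) : ℝ := -S.σ * ((1 - x ^ 2) * deriv S.y₂ x)

/-- The coefficient `u = (K φ)^{-1/3}` of the system. -/
noncomputable def u (x : ℝ) : ℝ := exp (-(S.y₁ x + S.y₂ x) / 3)

/-- The coefficient `w = K^{-1/3} φ^{-4/3}` of the system. -/
noncomputable def w (x : ℝ) : ℝ := exp (-(S.y₁ x + 4 * S.y₂ x) / 3)

/-- The forcing term `A = |u - w|` of the equation for `Q`, written `σ (u - w)`. -/
noncomputable def A (x : ℝ) : ℝ := S.σ * (S.u x - S.w x)

/-- The quantity `F = 3 - 4 u + w` to be bounded below. -/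
noncomputable def F (x : ℝ) : ℝ := 3 - 4 * S.u x + S.w x

lemma σ_eq_or : S.σ = -1 ∨ S.σ = 1 := Real.sign_apply_eq_of_ne_zero _ S.y₂_zero_ne

lemma σ_sq : S.σ ^ 2 = 1 := by
  rcases S.σ_eq_or with h | h <;> simp [h]

lemma u_eq : S.u x = S.w x + S.σ * S.A x := by
  rw [A]
  linear_combination -(S.u x - S.w x) * S.σ_sq

lemma u_pos : 0 < S.u x := exp_pos _

lemma w_pos : 0 < S.w x := exp_pos _

lemma P_one : S.P 1 = 0 := by simp [P]

lemma Q_one : S.Q 1 = 0 := by simp [Q]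

lemma u_one : S.u 1 = 1 := by simp [u, S.y₁_one, S.y₂_one]

lemma w_one : S.w 1 = 1 := by simp [w, S.y₁_one, S.y₂_one]

lemma A_one : S.A 1 = 0 := by simp [A, S.u_one, S.w_one]

lemma F_one : S.F 1 = 0 := by norm_num [F, S.u_one, S.w_one]

/-! ### Regularity -/

@[fun_prop]
lemma differentiable_y₁ : Differentiable ℝ S.y₁ := S.contDiff_y₁.differentiable (by simp)

@[fun_prop]
lemma differentiable_y₂ : Differentiable ℝ S.y₂ := S.contDiff_y₂.differentiable (by simp)

@[fun_prop]
lemma differentiable_P : Differentiable ℝ S.P := by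
  have := S.contDiff_y₁.differentiable_deriv_two
  unfold P
  fun_prop

@[fun_prop]
lemma differentiable_Q : Differentiable ℝ S.Q := by
  have := S.contDiff_y₂.differentiable_deriv_two
  unfold Q
  fun_prop

@[fun_prop]
lemma differentiable_u : Differentiable ℝ S.u := by
  unfold u
  fun_prop

@[fun_prop]
lemma differentiable_w : Differentiable ℝ S.w := by
  unfold w
  fun_prop

@[fun_prop]
lemma differentiable_A : Differentiable ℝ S.A := by
  unfold A
  fun_prop

@[fun_prop]
lemma differentiable_F : Differentiable ℝ S.F := by
  unfold F
  fun_prop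

@[fun_prop]
lemma continuous_y₁ : Continuous S.y₁ := S.differentiable_y₁.continuous

@[fun_prop]
lemma continuous_y₂ : Continuous S.y₂ := S.differentiable_y₂.continuous

@[fun_prop]
lemma continuous_P : Continuous S.P := S.differentiable_P.continuous

@[fun_prop]
lemma continuous_Q : Continuous S.Q := S.differentiable_Q.continuous

@[fun_prop]
lemma continuous_w : Continuous S.w := S.differentiable_w.continuous

@[fun_prop]
lemma continuous_A : Continuous S.A := S.differentiable_A.continuous

@[fun_prop]
lemma continuous_F : Continuous S.F := S.differentiable_F.continuous

/-! ### The rescaled system -/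

lemma rpow_mul_rpow_eq_u :
    exp (S.y₁ x) ^ (-(1 : ℝ) / 3) * exp (S.y₂ x) ^ (-(1 : ℝ) / 3) = S.u x := by
  rw [u, ← exp_mul, ← exp_mul, ← exp_add]
  ring_nf

lemma rpow_mul_rpow_eq_w :
    exp (S.y₁ x) ^ (-(1 : ℝ) / 3) * exp (S.y₂ x) ^ (-(4 : ℝ) / 3) = S.w x := by
  rw [w, ← exp_mul, ← exp_mul, ← exp_add]
  ring_nf

lemma deriv_P : deriv S.P x = (1 - x ^ 2) * deriv (deriv S.y₁) x - 2 * x * deriv S.y₁ x := by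
  have h := ((hasDerivAt_pow 2 x).const_sub 1).fun_mul
    (S.contDiff_y₁.differentiable_deriv_two x).hasDerivAt
  exact (h.congr_deriv (by push_cast; ring)).deriv

lemma deriv_Q :
    deriv S.Q x = -S.σ * ((1 - x ^ 2) * deriv (deriv S.y₂) x - 2 * x * deriv S.y₂ x) := by
  have h := (((hasDerivAt_pow 2 x).const_sub 1).fun_mul
    (S.contDiff_y₂.differentiable_deriv_two x).hasDerivAt).const_mul (-S.σ)
  exact (h.congr_deriv (by push_cast; ring)).deriv

lemma weight_mul_deriv_P (hx : x ∈ Ioo (0 : ℝ) 1) :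
    x * (1 - x ^ 2) * deriv S.P x
      = (1 + x ^ 2) * S.P x - x * S.P x ^ 2 / 6 - x * S.Q x ^ 2 / 3 := by
  have hE1 := S.eqE1 x hx
  have := hx.1.ne'
  have := (one_sub_sq_pos hx).ne'
  unfold BergerE1 at hE1
  field_simp at hE1
  rw [S.deriv_P, P, Q]
  linear_combination (1 - x ^ 2) / 18 * hE1
    + x * (1 - x ^ 2) ^ 2 * deriv S.y₂ x ^ 2 / 3 * S.σ_sq

lemma constraint (hx : x ∈ Ioo (0 : ℝ) 1) :
    48 * x * S.F x = x * S.Q x ^ 2 + 12 * (1 + x ^ 2) * S.P x - x * S.P x ^ 2 := by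
  have hE2 := S.eqE2 x hx
  have hP := S.weight_mul_deriv_P hx
  have := hx.1.ne'
  have := (one_sub_sq_pos hx).ne'
  unfold BergerE2 at hE2
  rw [mul_assoc 8 (exp (S.y₁ x) ^ _), mul_assoc 2 (exp (S.y₁ x) ^ _), rpow_mul_rpow_eq_u,
    rpow_mul_rpow_eq_w] at hE2
  field_simp at hE2
  rw [S.deriv_P] at hP
  rw [F]
  simp only [P, Q] at hP ⊢
  linear_combination 3 / 2 * hE2 - 3 * hP

lemma weight_sq_mul_deriv_deriv_y₂ (hx : x ∈ Ioo (0 : ℝ) 1) :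
    x * (1 - x ^ 2) ^ 2 * (deriv (deriv S.y₂) x + deriv S.y₁ x * deriv S.y₂ x / 2)
      = 2 * (1 + 2 * x ^ 2) * (1 - x ^ 2) * deriv S.y₂ x + 32 * x * (S.σ * S.A x) := by
  have hE3 := S.eqE3 x hx
  have hw : S.w x = S.u x * (exp (S.y₂ x))⁻¹ := by
    rw [w, u, ← exp_neg, ← exp_add]
    ring_nf
  have := hx.1.ne'
  have := (one_sub_sq_pos hx).ne'
  unfold BergerE3 at hE3
  rw [mul_assoc (32 * ((1 - x ^ 2)⁻¹) ^ 2), rpow_mul_rpow_eq_u, mul_assoc _ (S.u x), mul_sub_one,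
    ← hw] at hE3
  field_simp at hE3
  rw [A]
  linear_combination hE3 / 2 + 32 * x * (S.w x - S.u x) * S.σ_sq

lemma weight_mul_deriv_Q (hx : x ∈ Ioo (0 : ℝ) 1) :
    x * (1 - x ^ 2) * deriv S.Q x
      = 2 * (1 + x ^ 2) * S.Q x - x * S.P x * S.Q x / 2 - 32 * x * S.A x := by
  rw [S.deriv_Q, P, Q]
  linear_combination -S.σ * S.weight_sq_mul_deriv_deriv_y₂ hx - 32 * x * S.A x * S.σ_sq

lemma weight_mul_deriv_u : (1 - x ^ 2) * deriv S.u x = -S.u x * (S.P x - S.σ * S.Q x) / 3 := by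
  have h := ((S.differentiable_y₁ x).hasDerivAt.fun_add
    (S.differentiable_y₂ x).hasDerivAt).fun_neg.div_const 3 |>.exp
  rw [show deriv S.u x = _ from h.deriv, P, Q, u]
  linear_combination
    exp (-(S.y₁ x + S.y₂ x) / 3) * (1 - x ^ 2) * deriv S.y₂ x / 3 * S.σ_sq

lemma weight_mul_deriv_w :
    (1 - x ^ 2) * deriv S.w x = -S.w x * (S.P x - 4 * (S.σ * S.Q x)) / 3 := by
  have h := ((S.differentiable_y₁ x).hasDerivAt.fun_add
    ((S.differentiable_y₂ x).hasDerivAt.const_mul 4)).fun_neg.div_const 3 |>.exp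
  rw [show deriv S.w x = _ from h.deriv, P, Q, w]
  linear_combination
    exp (-(S.y₁ x + 4 * S.y₂ x) / 3) * (1 - x ^ 2) * deriv S.y₂ x * 4 / 3 * S.σ_sq

lemma weight_mul_deriv_A :
    (1 - x ^ 2) * deriv S.A x = (S.Q x * (S.u x - 4 * S.w x) - S.A x * S.P x) / 3 := by
  have h := ((S.differentiable_u x).hasDerivAt.fun_sub
    (S.differentiable_w x).hasDerivAt).const_mul S.σ
  rw [show deriv S.A x = _ from h.deriv, A]
  linear_combination S.σ * S.weight_mul_deriv_u - S.σ * S.weight_mul_deriv_w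
    + S.Q x * (S.u x - 4 * S.w x) / 3 * S.σ_sq

lemma weight_mul_deriv_F :
    (1 - x ^ 2) * deriv S.F x = (S.P x * (3 - S.F x) - 4 * (S.Q x * S.A x)) / 3 := by
  have h := ((S.differentiable_u x).hasDerivAt.const_mul 4).const_sub 3 |>.fun_add
    (S.differentiable_w x).hasDerivAt
  rw [show deriv S.F x = _ from h.deriv, F, A]
  linear_combination -4 * S.weight_mul_deriv_u + S.weight_mul_deriv_w

/-! ### Signs of the unknowns -/

lemma P_nonneg (hx : x ∈ Icc (0 : ℝ) 1) : 0 ≤ S.P x := by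
  refine nonneg_of_deriv_neg_of_neg (by fun_prop) S.P_one.ge
    (fun x hx hneg => neg_of_weight_mul_neg hx ?_) hx
  rw [S.weight_mul_deriv_P hx]
  have hlin : (1 + x ^ 2) * S.P x < 0 := mul_neg_of_pos_of_neg (by positivity) hneg
  have hx₀ := hx.1
  have : 0 ≤ x * S.P x ^ 2 := by positivity
  have : 0 ≤ x * S.Q x ^ 2 := by positivity
  linarith

lemma mul_P_le (hx : x ∈ Icc (0 : ℝ) 1) : x * S.P x ≤ 12 := by
  refine le_of_deriv_neg_of_gt (f := fun x => x * S.P x)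
    (by fun_prop) (by norm_num)
    (fun x hx hgt => neg_of_weight_mul_neg hx ?_) hx
  have hderiv : x * (1 - x ^ 2) * deriv (fun x => x * S.P x) x
      = x * S.P x * (12 - x * S.P x) / 6 - x ^ 2 * S.Q x ^ 2 / 3 := by
    rw [((hasDerivAt_id' x).fun_mul (S.differentiable_P x).hasDerivAt).deriv]
    linear_combination x * S.weight_mul_deriv_P hx
  have : x * S.P x * (12 - x * S.P x) < 0 :=
    mul_neg_of_pos_of_neg (by linarith) (by linarith)
  have : 0 ≤ x ^ 2 * S.Q x ^ 2 := by positivity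
  linarith

lemma Q_sq_add_le (hx : x ∈ Ioo (0 : ℝ) 1) : S.Q x ^ 2 + 12 * (x * S.P x) ≤ 48 * S.F x := by
  have hP := S.P_nonneg (Ioo_subset_Icc_self hx)
  have hxP := S.mul_P_le (Ioo_subset_Icc_self hx)
  refine le_of_mul_le_mul_left ?_ hx.1
  linear_combination mul_nonneg hP (sub_nonneg.2 hxP) - S.constraint hx

lemma A_nonneg_iff : 0 ≤ S.A x ↔ 0 ≤ S.σ * S.y₂ x := by
  rcases S.σ_eq_or with h | h <;>
  · simp only [A, u, w, h, one_mul, neg_one_mul, sub_nonneg, neg_nonneg, sub_nonpos, exp_le_exp]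
    constructor <;> intro <;> linarith

lemma A_zero_pos : 0 < S.A 0 := by
  have hy : 0 < S.σ * S.y₂ 0 := Real.sign_mul_pos_of_ne_zero _ S.y₂_zero_ne
  refine (S.A_nonneg_iff.2 hy.le).lt_of_ne' fun hA => ?_
  have huw := S.u_eq (x := 0)
  rw [hA, mul_zero, add_zero, u, w, exp_eq_exp] at huw
  exact S.y₂_zero_ne (by linarith)

lemma σ_mul_y₂_nonneg (hx : x ∈ Icc (0 : ℝ) 1) : 0 ≤ S.σ * S.y₂ x := by
  obtain ⟨c, hc, hmin⟩ := isCompact_Icc.exists_isMinOn (f := fun x => S.σ * S.y₂ x)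
    (nonempty_Icc.2 zero_le_one) (by fun_prop)
  suffices h : 0 ≤ S.σ * S.y₂ c from h.trans (hmin hx)
  by_contra! hneg
  have hc₀ : c ≠ 0 := by
    rintro rfl
    exact hneg.not_ge (S.A_nonneg_iff.1 S.A_zero_pos.le)
  have hc₁ : c ≠ 1 := by
    rintro rfl
    simp [S.y₂_one] at hneg
  replace hc : c ∈ Ioo (0 : ℝ) 1 := ⟨hc.1.lt_of_ne' hc₀, hc.2.lt_of_ne hc₁⟩
  have hloc := hmin.isLocalMin (Icc_mem_nhds hc.1 hc.2)
  have hcrit := hloc.deriv_eq_zero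
  have hconvex := deriv_deriv_nonneg_of_isLocalMin hloc (by fun_prop)
  simp only [deriv_const_mul_field'] at hcrit hconvex
  have hA : S.A c < 0 := lt_of_not_ge fun h => hneg.not_ge (S.A_nonneg_iff.1 h)
  have heq : c * (1 - c ^ 2) ^ 2 * (S.σ * deriv (deriv S.y₂) c) = 32 * c * S.A c := by
    linear_combination S.σ * S.weight_sq_mul_deriv_deriv_y₂ hc + 32 * c * S.A c * S.σ_sq
      + (2 * (1 + 2 * c ^ 2) * (1 - c ^ 2) - c * (1 - c ^ 2) ^ 2 * deriv S.y₁ c / 2) * hcrit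
  have hc₀ := hc.1
  have : 0 ≤ c * (1 - c ^ 2) ^ 2 * (S.σ * deriv (deriv S.y₂) c) := by positivity
  have : 32 * c * S.A c < 0 := mul_neg_of_pos_of_neg (by positivity) hA
  linarith

lemma A_nonneg (hx : x ∈ Icc (0 : ℝ) 1) : 0 ≤ S.A x := S.A_nonneg_iff.2 (S.σ_mul_y₂_nonneg hx)

lemma weight_mul_deriv_exp_mul_Q (hx : x ∈ Ioo (0 : ℝ) 1) :
    x * (1 - x ^ 2) * deriv (fun x => exp (S.y₁ x / 2) * S.Q x) x
      = 2 * exp (S.y₁ x / 2) * ((1 + x ^ 2) * S.Q x - 16 * (x * S.A x)) := by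
  have hQ := S.weight_mul_deriv_Q hx
  rw [P] at hQ
  rw [(((S.differentiable_y₁ x).hasDerivAt.div_const 2).exp.fun_mul
    (S.differentiable_Q x).hasDerivAt).deriv]
  linear_combination exp (S.y₁ x / 2) * hQ

lemma Q_nonneg (hx : x ∈ Icc (0 : ℝ) 1) : 0 ≤ S.Q x := by
  refine nonneg_of_mul_nonneg_right (nonneg_of_deriv_neg_of_neg
    (f := fun x => exp (S.y₁ x / 2) * S.Q x)
    (by fun_prop) (by simp [S.Q_one]) (fun x hx hneg => neg_of_weight_mul_neg hx ?_) hx) (exp_pos _)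
  have hQ : (1 + x ^ 2) * S.Q x < 0 :=
    mul_neg_of_pos_of_neg (by positivity) (neg_of_mul_neg_right hneg (exp_pos _).le)
  have hA : 0 ≤ x * S.A x := mul_nonneg hx.1.le (S.A_nonneg (Ioo_subset_Icc_self hx))
  rw [S.weight_mul_deriv_exp_mul_Q hx]
  exact mul_neg_of_pos_of_neg (by positivity) (by linarith)

lemma neg_mul_le_deriv_A_add_Q (hx : x ∈ Ioo (0 : ℝ) 1) :
    -((S.P x + 4 * S.w x + 32) / (1 - x ^ 2)) * (S.A x + S.Q x)
      ≤ deriv (fun x => S.A x + S.Q x) x := by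
  have hA := S.A_nonneg (Ioo_subset_Icc_self hx)
  have hP := S.P_nonneg (Ioo_subset_Icc_self hx)
  have hQ := S.Q_nonneg (Ioo_subset_Icc_self hx)
  have hu := S.u_pos (x := x)
  have hw := S.w_pos (x := x)
  have hx₀ := hx.1
  rw [← neg_div, div_mul_eq_mul_div, div_le_iff₀ (one_sub_sq_pos hx)]
  refine le_of_mul_le_mul_left ?_ hx₀
  rw [((S.differentiable_A x).hasDerivAt.fun_add (S.differentiable_Q x).hasDerivAt).deriv]
  have hrest : 0 ≤ x * (S.u x * S.Q x / 3 + 8 * (S.w x * S.Q x) / 3 + 4 * (S.w x * S.A x)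
      + 2 * (S.P x * S.A x) / 3 + S.P x * S.Q x / 2 + 32 * S.Q x) + 2 * (1 + x ^ 2) * S.Q x := by
    positivity
  linear_combination hrest - x * S.weight_mul_deriv_A - S.weight_mul_deriv_Q hx

/- At an interior zero `A` has a minimum, so `Q` vanishes there too, and backward uniqueness gives
`A = Q = 0` down to `x = 0`. -/
lemma A_pos (hx : x ∈ Ioo (0 : ℝ) 1) : 0 < S.A x := by
  refine (S.A_nonneg (Ioo_subset_Icc_self hx)).lt_of_ne' fun hA => ?_
  have hmin : IsLocalMin S.A x := by
    filter_upwards [Icc_mem_nhds hx.1 hx.2] with y hy using hA.trans_le (S.A_nonneg hy)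
  have hQ : S.Q x = 0 := by
    have hderiv := S.weight_mul_deriv_A (x := x)
    rw [hmin.deriv_eq_zero, S.u_eq, hA] at hderiv
    exact (mul_eq_zero.1 (by linear_combination hderiv : S.w x * S.Q x = 0)).resolve_left
      S.w_pos.ne'
  have hsub : Icc 0 x ⊆ Icc (0 : ℝ) 1 := Icc_subset_Icc_right hx.2.le
  have hden : ∀ y ∈ Icc 0 x, 1 - y ^ 2 ≠ 0 := fun y hy =>
    (by nlinarith [hy.1, hy.2, hx.2] : 0 < 1 - y ^ 2).ne'
  have hcont : ContinuousOn (fun y => (S.P y + 4 * S.w y + 32) / (1 - y ^ 2)) (Icc 0 x) := by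
    fun_prop (disch := assumption)
  obtain ⟨C, hC⟩ := isCompact_Icc.bddAbove_image hcont
  have hzero : S.A 0 + S.Q 0 ≤ 0 := by
    refine nonpos_of_neg_mul_le_deriv (f := fun y => S.A y + S.Q y) (C := C) (by fun_prop)
      (by fun_prop) (fun y hy => ?_) (by rw [hA, hQ, add_zero]) (left_mem_Icc.2 hx.1.le)
    have hy' := Ioo_subset_Icc_self hy
    have hN := add_nonneg (S.A_nonneg (hsub hy')) (S.Q_nonneg (hsub hy'))
    refine le_trans ?_ (S.neg_mul_le_deriv_A_add_Q ⟨hy.1, hy.2.trans hx.2⟩)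
    gcongr
    exact hC (mem_image_of_mem _ hy')
  linarith [S.A_zero_pos, S.Q_nonneg (left_mem_Icc.2 zero_le_one)]

lemma Q_pos (hx : x ∈ Ioo (0 : ℝ) 1) : 0 < S.Q x := by
  refine pos_of_mul_pos_right (pos_of_deriv_neg_of_nonpos (f := fun x => exp (S.y₁ x / 2) * S.Q x)
    (by fun_prop) (by simp [S.Q_one]) (fun x hx hle => neg_of_weight_mul_neg hx ?_) hx)
    (exp_pos _).le
  have hQ : (1 + x ^ 2) * S.Q x ≤ 0 :=
    mul_nonpos_of_nonneg_of_nonpos (by positivity) (nonpos_of_mul_nonpos_right hle (exp_pos _))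
  have hA : 0 < x * S.A x := mul_pos hx.1 (S.A_pos hx)
  rw [S.weight_mul_deriv_exp_mul_Q hx]
  exact mul_neg_of_pos_of_neg (by positivity) (by linarith)

lemma F_nonneg (hx : x ∈ Ioo (0 : ℝ) 1) : 0 ≤ S.F x := by
  have hxP := mul_nonneg hx.1.le (S.P_nonneg (Ioo_subset_Icc_self hx))
  linarith [S.Q_sq_add_le hx, sq_nonneg (S.Q x)]

lemma F_eq : S.F x = 3 - 3 * S.w x - 4 * (S.σ * S.A x) := by
  rw [F, u_eq]
  ring

/-! ### Barriers -/

lemma weight_mul_deriv_barrier (hx : x ∈ Ioo (0 : ℝ) 1) :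
    x * (1 - x ^ 2) * deriv (fun x => S.Q x + k * S.Q x ^ 2 - 4 * (x * S.A x)) x
      = (1 + 2 * k * S.Q x) * (2 * (1 + x ^ 2) * S.Q x - x * S.P x * S.Q x / 2 - 32 * x * S.A x)
        + 4 * x * S.A x * (x * S.P x / 3 - (1 - x ^ 2))
        + 4 / 3 * x ^ 2 * S.Q x * (3 * S.w x - S.σ * S.A x) := by
  have hA := S.weight_mul_deriv_A (x := x)
  rw [u_eq] at hA
  have hQ' := (S.differentiable_Q x).hasDerivAt
  rw [((hQ'.fun_add ((hQ'.fun_pow 2).const_mul k)).fun_sub (((hasDerivAt_id' x).fun_mul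
    (S.differentiable_A x).hasDerivAt).const_mul 4)).deriv]
  push_cast
  linear_combination (1 + 2 * k * S.Q x) * S.weight_mul_deriv_Q hx - 4 * x ^ 2 * hA

/- `F ≥ 0` gives `3 w - σ A ≤ 3 - 5 σ A`, so for `σ = -1` the right-hand side exceeds its value for
`σ = 1` by a multiple of `Q A`; the quadratic term `k Q²` absorbs it once `48 k ≥ 5`. -/
lemma four_mul_A_le (hk : 0 ≤ k) (hkσ : -5 * S.σ ≤ 48 * k) (hx : x ∈ Icc (0 : ℝ) 1) :
    4 * (x * S.A x) ≤ S.Q x + k * S.Q x ^ 2 := by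
  refine sub_nonneg.1 (nonneg_of_deriv_neg_of_neg
    (f := fun x => S.Q x + k * S.Q x ^ 2 - 4 * (x * S.A x)) (by fun_prop)
    (by simp [S.Q_one, S.A_one]) (fun x hx hneg => neg_of_weight_mul_neg hx ?_) hx)
  have hx' := Ioo_subset_Icc_self hx
  have hx₀ := hx.1
  have hx₁ := sub_nonneg.2 hx.2.le
  have hx₂ := (one_sub_sq_pos hx).le
  have hA := S.A_nonneg hx'
  have hP := S.P_nonneg hx'
  have hQ := S.Q_nonneg hx'
  have hxP := S.mul_P_le hx'
  have hforcing : 3 * S.w x - S.σ * S.A x ≤ 3 + 48 * k * S.A x := by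
    linarith [S.F_nonneg hx, S.F_eq (x := x), mul_le_mul_of_nonneg_right hkσ hA]
  have hexcess : 0 < 4 * (x * S.A x) - (S.Q x + k * S.Q x ^ 2) := by linarith
  have hfactor : 0 < 8 + 16 * k * S.Q x * (1 - x) + (1 - x ^ 2) - x * S.P x / 3 := by
    have : 0 ≤ 16 * k * S.Q x * (1 - x) := by positivity
    linarith
  have hboundary : 0 ≤ (1 - x ^ 2) * (7 * S.Q x + 5 * k * S.Q x ^ 2)
      + x * S.P x * (S.Q x / 6 + 2 / 3 * k * S.Q x ^ 2)
      + 16 * k * (1 - x) * S.Q x ^ 2 * (1 + k * S.Q x) := by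
    positivity
  have hcoeff : 0 ≤ 4 / 3 * x ^ 2 * S.Q x := by positivity
  rw [S.weight_mul_deriv_barrier hx]
  linear_combination mul_pos hexcess hfactor + hboundary
    + mul_le_mul_of_nonneg_left hforcing hcoeff

lemma y₁_nonpos (hx : x ∈ Icc (0 : ℝ) 1) : S.y₁ x ≤ 0 := by
  have hmono : MonotoneOn S.y₁ (Icc 0 1) := by
    refine monotoneOn_of_deriv_nonneg (convex_Icc 0 1) (by fun_prop) (by fun_prop) fun y hy => ?_
    rw [interior_Icc] at hy
    exact nonneg_of_mul_nonneg_right (S.P_nonneg (Ioo_subset_Icc_self hy)) (one_sub_sq_pos hy)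
  exact (hmono hx (right_mem_Icc.2 zero_le_one) hx.2).trans_eq S.y₁_one

lemma sq_add_le_A_of_lt_Q (hσ : S.σ = -1) (hx : x ∈ Ioo (0 : ℝ) 1) (hQ : 9 / 2 < S.Q x) :
    S.Q x ^ 2 / 48 + 3 / 5 ≤ S.A x := by
  have hx' := Ioo_subset_Icc_self hx
  have hy₁ := S.y₁_nonpos hx'
  have hy₂ := S.σ_mul_y₂_nonneg hx'
  rw [hσ] at hy₂
  have hF : S.Q x ^ 2 / 48 ≤ S.F x := by
    linarith [S.Q_sq_add_le hx, mul_nonneg hx.1.le (S.P_nonneg hx')]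
  have hu₁ : 1 ≤ S.u x := one_le_exp (by linarith)
  have hwu : S.w x ≤ S.u x ^ 4 := by
    rw [w, u, ← exp_nat_mul, exp_le_exp]
    push_cast
    linarith
  have hu : 6 / 5 ≤ S.u x := by
    by_contra! hu
    have hsmall : (S.u x - 1) ^ 2 * (S.u x ^ 2 + 2 * S.u x + 3)
        ≤ (6 / 5 - 1) ^ 2 * ((6 / 5) ^ 2 + 2 * (6 / 5) + 3) := by gcongr
    rw [F] at hF
    nlinarith
  have hwA := S.u_eq (x := x)
  rw [F] at hF
  rw [hσ] at hwA
  linarith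

lemma mul_Q_le (hσ : S.σ = -1) (hx : x ∈ Icc (0 : ℝ) 1) : x * S.Q x ≤ 9 / 2 := by
  refine le_of_deriv_neg_of_gt (f := fun x => x * S.Q x) (by fun_prop) (by norm_num)
    (fun x hx hgt => neg_of_weight_mul_neg hx ?_) hx
  have hx₀ := hx.1
  have hx₂ := one_sub_sq_pos hx
  have hP := S.P_nonneg (Ioo_subset_Icc_self hx)
  have hQ : 9 / 2 < S.Q x := hgt.trans_le (mul_le_of_le_one_left
    (S.Q_nonneg (Ioo_subset_Icc_self hx)) hx.2.le)
  have hA := S.sq_add_le_A_of_lt_Q hσ hx hQ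
  have hderiv : x * (1 - x ^ 2) * deriv (fun x => x * S.Q x) x
      = x * S.Q x * (3 + x ^ 2) - x * S.P x * (x * S.Q x) / 2 - 32 * x ^ 2 * S.A x := by
    rw [((hasDerivAt_id' x).fun_mul (S.differentiable_Q x).hasDerivAt).deriv]
    linear_combination x * S.weight_mul_deriv_Q hx
  have hdamping : 0 ≤ x * S.P x * (x * S.Q x) := by positivity
  have hforcing : 32 * x ^ 2 * (S.Q x ^ 2 / 48 + 3 / 5) ≤ 32 * x ^ 2 * S.A x := by gcongr
  have hquadratic : 0 < (1 - x ^ 2) * (2 / 3 * (x * S.Q x) * (x * S.Q x - 9 / 2))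
      + x ^ 2 * (2 / 3 * (x * S.Q x - 3) ^ 2 + 66 / 5) := by
    have := sub_pos.2 hgt
    positivity
  rw [hderiv]
  linear_combination hdamping / 2 + hforcing + hquadratic

/-! ### The pointwise inequality -/

lemma weight_mul_deriv_F_sub (hx : x ∈ Ioo (0 : ℝ) 1) :
    x * (1 - x ^ 2) * deriv (fun x => S.F x - x ^ 2 * S.Q x ^ 2 / 36) x
      = x * S.P x * (1 - S.F x / 3 + x ^ 2 * S.Q x ^ 2 / 36)
        + 4 / 9 * (4 * x ^ 2 - 3) * S.Q x * (x * S.A x)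
        - x ^ 2 * S.Q x ^ 2 * (3 + x ^ 2) / 18 := by
  rw [((S.differentiable_F x).hasDerivAt.fun_sub (((hasDerivAt_pow 2 x).fun_mul
    ((S.differentiable_Q x).hasDerivAt.fun_pow 2)).div_const 36)).deriv]
  push_cast
  linear_combination x * S.weight_mul_deriv_F - x ^ 2 * S.Q x / 18 * S.weight_mul_deriv_Q hx

lemma sq_lt_F_of_barrier (hk : 0 ≤ k) (hkσ : -5 * S.σ ≤ 48 * k)
    (hb : ∀ x ∈ Ioo (0 : ℝ) 1, 3 ≤ 4 * x ^ 2 →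
      1 - S.F x / 3 + x ^ 2 * S.Q x ^ 2 / 36 + 4 * k * S.Q x ≤ 4) (hx : x ∈ Ioo (0 : ℝ) 1) :
    x ^ 2 * S.Q x ^ 2 / 36 < S.F x := by
  refine sub_pos.1 (pos_of_deriv_neg_of_nonpos (f := fun x => S.F x - x ^ 2 * S.Q x ^ 2 / 36)
    (by fun_prop) (by simp [S.F_one, S.Q_one]) (fun x hx hle => neg_of_weight_mul_neg hx ?_) hx)
  have hx' := Ioo_subset_Icc_self hx
  have hxP : 0 ≤ x * S.P x := mul_nonneg hx.1.le (S.P_nonneg hx')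
  have hQ := S.Q_pos hx
  have hF := S.F_nonneg hx
  have henergy : 36 * (x * S.P x) ≤ (4 * x ^ 2 - 3) * S.Q x ^ 2 := by
    linarith [S.Q_sq_add_le hx]
  have hx₃ : 0 ≤ 4 * x ^ 2 - 3 :=
    nonneg_of_mul_nonneg_left (henergy.trans' (by positivity)) (by positivity)
  have hcoeff := hb x hx (sub_nonneg.1 hx₃)
  have hP_term : x * S.P x * (1 - S.F x / 3 + x ^ 2 * S.Q x ^ 2 / 36)
      ≤ (4 * x ^ 2 - 3) * S.Q x ^ 2 / 36 * (4 - 4 * k * S.Q x) := by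
    gcongr <;> linarith
  have hA_term : 4 / 9 * (4 * x ^ 2 - 3) * S.Q x * (4 * (x * S.A x))
      ≤ 4 / 9 * (4 * x ^ 2 - 3) * S.Q x * (S.Q x + k * S.Q x ^ 2) := by
    gcongr
    exact S.four_mul_A_le hk hkσ hx'
  have hgap : 0 < S.Q x ^ 2 * ((1 - x ^ 2) * (12 - x ^ 2)) := by
    have := one_sub_sq_pos hx
    have : 0 < 12 - x ^ 2 := by linarith
    positivity
  rw [S.weight_mul_deriv_F_sub hx]
  linear_combination hP_term + hA_term / 4 + hgap / 18

theorem sq_lt_F (hx : x ∈ Ioo (0 : ℝ) 1) : x ^ 2 * S.Q x ^ 2 / 36 < S.F x := by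
  rcases S.σ_eq_or with hσ | hσ
  · refine S.sq_lt_F_of_barrier (k := 5 / 48) (by norm_num) (by norm_num [hσ])
      (fun x hx hx₃ => ?_) hx
    have hxQ := S.mul_Q_le hσ (Ioo_subset_Icc_self hx)
    have hQ := S.Q_nonneg (Ioo_subset_Icc_self hx)
    have hx₄ : 4 / 5 < x := by nlinarith [hx.1]
    have : (x * S.Q x) ^ 2 ≤ (9 / 2) ^ 2 := pow_le_pow_left₀ (mul_nonneg hx.1.le hQ) hxQ 2
    have : 4 / 5 * S.Q x ≤ x * S.Q x := by gcongr
    linarith [S.F_nonneg hx]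
  · refine S.sq_lt_F_of_barrier le_rfl (by norm_num [hσ]) (fun x hx _ => ?_) hx
    have hx' := Ioo_subset_Icc_self hx
    have hF : S.F x ≤ 3 := by
      linarith [hσ ▸ S.F_eq (x := x), S.w_pos (x := x), S.A_nonneg hx']
    have : x ^ 2 * S.Q x ^ 2 ≤ S.Q x ^ 2 :=
      mul_le_of_le_one_left (sq_nonneg _) (by linarith [one_sub_sq_pos hx])
    linarith [S.Q_sq_add_le hx, mul_nonneg hx.1.le (S.P_nonneg hx')]

end NontrivialBergerSolution

theorem berger_pointwise_inequality_general (y1 y2 : ℝ → ℝ)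
    (hy1 : ContDiff ℝ 2 y1) (hy2 : ContDiff ℝ 2 y2)
    (hE1 : ∀ x ∈ Ioo (0 : ℝ) 1, BergerE1 y1 y2 x = 0)
    (hE2 : ∀ x ∈ Ioo (0 : ℝ) 1, BergerE2 y1 y2 x = 0)
    (hE3 : ∀ x ∈ Ioo (0 : ℝ) 1, BergerE3 y1 y2 x = 0)
    (hK : Real.exp (y1 1) = 1) (hphi : Real.exp (y2 1) = 1) (hphi0 : Real.exp (y2 0) ≠ 1) :
    ∀ x ∈ Ioo (0 : ℝ) 1,
      (1/36) * x^2 * (1 - x^2)^2 * (deriv y2 x)^2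
        < 3 - 4 * (Real.exp (y2 x) * Real.exp (y1 x)) ^ (-(1:ℝ)/3)
          + Real.exp (y1 x) ^ (-(1:ℝ)/3) * Real.exp (y2 x) ^ (-(4:ℝ)/3) := by
  intro x hx
  let S : NontrivialBergerSolution :=
    ⟨y1, y2, hy1, hy2, hE1, hE2, hE3, exp_eq_one_iff _ |>.1 hK, exp_eq_one_iff _ |>.1 hphi,
      mt (exp_eq_one_iff _).2 hphi0⟩
  have hQ : S.Q x ^ 2 = (1 - x ^ 2) ^ 2 * deriv y2 x ^ 2 := by
    rw [NontrivialBergerSolution.Q]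
    linear_combination ((1 - x ^ 2) * deriv y2 x) ^ 2 * S.σ_sq
  have hF : S.F x = 3 - 4 * (exp (y2 x) * exp (y1 x)) ^ (-(1 : ℝ) / 3)
      + exp (y1 x) ^ (-(1 : ℝ) / 3) * exp (y2 x) ^ (-(4 : ℝ) / 3) := by
    rw [mul_comm (exp (y2 x)), mul_rpow (exp_pos _).le (exp_pos _).le]
    exact congrArg₂ (3 - 4 * · + ·) S.rpow_mul_rpow_eq_u.symm S.rpow_mul_rpow_eq_w.symm
  rw [← hF]
  linear_combination S.sq_lt_F hx - x ^ 2 / 36 * hQ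

/-- for a solution of the Berger BVP with `phi(0) ≠ 1`, on `(0,1)`:
`3 − 4(phi K)^{-1/3} + K^{-1/3} phi^{-4/3} > (1/36)x²(1−x²)²(y2')² ≥ 0`. -/
theorem berger_pointwise_inequality (y1 y2 : ℝ → ℝ)
    (hsol : BergerBVPSolution y1 y2)
    (hphi0 : Real.exp (y2 0) ≠ 1) :
    ∀ x ∈ Ioo (0:ℝ) 1,
      (1/36) * x^2 * (1 - x^2)^2 * (deriv y2 x)^2
        < 3 - 4 * (Real.exp (y2 x) * Real.exp (y1 x)) ^ (-(1:ℝ)/3)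
          + Real.exp (y1 x) ^ (-(1:ℝ)/3) * Real.exp (y2 x) ^ (-(4:ℝ)/3) ∧
      0 ≤ (1/36) * x^2 * (1 - x^2)^2 * (deriv y2 x)^2 :=
  fun x hx =>
    ⟨berger_pointwise_inequality_general y1 y2 (hsol.smooth1.of_le (by norm_cast))
      (hsol.smooth2.of_le (by norm_cast)) hsol.eqE1 hsol.eqE2 hsol.eqE3 hsol.bdryK
      hsol.bdryPhi hphi0 x hx, by positivity⟩
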